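/- arXiv:2206.15287 — 10 statements merged into one kernel-verified Lean document; each statement's English description precedes it below -/
import Mathlib

section
/- Let ρ ∈ M_m(ℂ) and σ ∈ M_n(ℂ) be faithful density matrices, and let E : M_m(ℂ) → M_n(ℂ) be a linear map with E(1) = 1, Tr(σ E(a)) = Tr(ρ a) for all a ∈ M_m(ℂ), and satisfying the Schwarz inequality: E(a*a) − E(a)*E(a) is positive semidefinite for every a ∈ M_m(ℂ). Let k_1,…,k_d ∈ M_m(ℂ) and l_1,…,l_d ∈ M_n(ℂ). If Σ_{i=1}^d [ Tr(ρ k_i* k_i) + Tr(σ l_i* l_i) − Tr(σ E(k_i)* l_i) − Tr(σ l_i* E(k_i)) ] = 0, then E(k_i) = l_i and E(k_i* k_i) = E(k_i)* E(k_i) for every i = 1,…,d. -/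
open Matrix
open scoped ComplexOrder

theorem trace_aux {n : ℕ} (σ P : Matrix (Fin n) (Fin n) ℂ) (hσ : σ.PosDef)
    (hP : P.PosSemidef) :
    0 ≤ (σ * P).trace ∧ ((σ * P).trace = 0 → P = 0) := by
  obtain ⟨B, hB, rfl⟩ : ∃ B : Matrix (Fin n) (Fin n) ℂ, IsUnit B ∧ σ = Bᴴ * B := by
    open scoped MatrixOrder in
    obtain ⟨B, hB⟩ := (CStarAlgebra.nonneg_iff_eq_star_mul_self).mp hσ.posSemidef.nonneg
    refine ⟨B, ?_, hB⟩
    have hu := hσ.isUnit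
    rw [hB] at hu
    rw [Matrix.isUnit_iff_isUnit_det] at hu ⊢
    rw [Matrix.det_mul] at hu
    exact isUnit_of_mul_isUnit_right hu
  have e : (Bᴴ * B * P).trace = (B * P * Bᴴ).trace := by
    rw [mul_assoc, Matrix.trace_mul_comm]
  have hQ := hP.mul_mul_conjTranspose_same B
  rw [e]
  refine ⟨hQ.trace_nonneg, fun h => ?_⟩
  have h0 := hQ.trace_eq_zero_iff.mp h
  have hB' : IsUnit Bᴴ := hB.star
  rw [hB'.mul_left_eq_zero, hB.mul_right_eq_zero] at h0
  exact h0

/-- If a unital, trace-compatible linear map E satisfying the Schwarz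
inequality has total transport cost zero relative to coordinates k and l, then
E(k_i) = l_i and E(k_i* k_i) = E(k_i)* E(k_i) for every i. -/
theorem stmt_3 {m n d : ℕ}
    (ρ : Matrix (Fin m) (Fin m) ℂ) (σ : Matrix (Fin n) (Fin n) ℂ)
    (hρ : ρ.PosDef) (hρtr : ρ.trace = 1)
    (hσ : σ.PosDef) (hσtr : σ.trace = 1)
    (E : Matrix (Fin m) (Fin m) ℂ →ₗ[ℂ] Matrix (Fin n) (Fin n) ℂ)
    (hunital : E 1 = 1)
    (htr : ∀ a, (σ * E a).trace = (ρ * a).trace)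
    (hschwarz : ∀ a, (E ((aᴴ) * a) - (E a)ᴴ * E a).PosSemidef)
    (k : Fin d → Matrix (Fin m) (Fin m) ℂ) (l : Fin d → Matrix (Fin n) (Fin n) ℂ)
    (hcost : ∑ i, ((ρ * ((k i)ᴴ * k i)).trace + (σ * ((l i)ᴴ * l i)).trace
        - (σ * ((E (k i))ᴴ * l i)).trace - (σ * ((l i)ᴴ * E (k i))).trace) = 0) :
    ∀ i, E (k i) = l i ∧ E ((k i)ᴴ * k i) = (E (k i))ᴴ * E (k i) := by
  have key : ∀ i, (ρ * ((k i)ᴴ * k i)).trace + (σ * ((l i)ᴴ * l i)).trace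
        - (σ * ((E (k i))ᴴ * l i)).trace - (σ * ((l i)ᴴ * E (k i))).trace
      = (σ * (E ((k i)ᴴ * k i) - (E (k i))ᴴ * E (k i))).trace
        + (σ * ((E (k i) - l i)ᴴ * (E (k i) - l i))).trace := by
    intro i
    rw [← htr]
    simp only [conjTranspose_sub, mul_sub, sub_mul, trace_sub]
    ring
  simp only [key] at hcost
  have h1 := fun i => trace_aux σ _ hσ (hschwarz (k i))
  have h2 := fun i => trace_aux σ _ hσ (posSemidef_conjTranspose_mul_self (E (k i) - l i))
  rw [Finset.sum_eq_zero_iff_of_nonneg (fun i _ => add_nonneg (h1 i).1 (h2 i).1)] at hcost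
  intro i
  have h := (add_eq_zero_iff_of_nonneg (h1 i).1 (h2 i).1).mp (hcost i (Finset.mem_univ i))
  exact ⟨sub_eq_zero.mp (conjTranspose_mul_self_eq_zero.mp ((h2 i).2 h.2)),
    sub_eq_zero.mp ((h1 i).2 h.1)⟩
end

section
/- Let (m, α, μ) and (n, β, ν) be classical systems both satisfying detailed balance (μ_p α_{pq} = μ_q α_{qp} for all p,q, and ν_r β_{rs} = ν_s β_{sr} for all r,s), and let ω be a coupling of μ and ν. Then ω is a transport plan from (m, α, μ) to (n, β, ν) if and only if its transpose ωᵀ (defined by ωᵀ_{rp} = ω_{pr}) is a transport plan from (n, β, ν) to (m, α, μ). -/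
/-- A classical system: a row-stochastic matrix α with strictly positive invariant
probability vector μ. -/
def IsClassicalSystem {m : ℕ} (α : Fin m → Fin m → ℝ) (μ : Fin m → ℝ) : Prop :=
  (∀ p q, 0 ≤ α p q) ∧ (∀ p, ∑ q, α p q = 1) ∧
  (∀ p, 0 < μ p) ∧ (∑ p, μ p = 1) ∧ (∀ q, ∑ p, μ p * α p q = μ q)

/-- A coupling of the probability vectors μ and ν. -/
def IsCoupling {m n : ℕ} (μ : Fin m → ℝ) (ν : Fin n → ℝ) (ω : Fin m → Fin n → ℝ) : Prop :=
  (∀ p r, 0 ≤ ω p r) ∧ (∀ p, ∑ r, ω p r = μ p) ∧ (∀ r, ∑ p, ω p r = ν r)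

/-- A transport plan from the system (m, α, μ) to the system (n, β, ν): a coupling ω
satisfying Σ_p ω_{pr} α_{pq} = Σ_s ω_{qs} (ν_r/ν_s) β_{rs} for all q, r. -/
def IsTransportPlan {m n : ℕ} (α : Fin m → Fin m → ℝ) (μ : Fin m → ℝ)
    (β : Fin n → Fin n → ℝ) (ν : Fin n → ℝ) (ω : Fin m → Fin n → ℝ) : Prop :=
  IsCoupling μ ν ω ∧
    ∀ (q : Fin m) (r : Fin n), ∑ p, ω p r * α p q = ∑ s, ω q s * (ν r / ν s * β r s)

/-- The quadratic transport cost of a coupling ω relative to the coordinates k and l. -/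
def transportCost {d m n : ℕ} (k : Fin d → Fin m → ℝ) (l : Fin d → Fin n → ℝ)
    (ω : Fin m → Fin n → ℝ) : ℝ :=
  ∑ i, ∑ p, ∑ r, ω p r * (k i p - l i r) ^ 2

/-- The Wasserstein distance from (m, α, μ) with coordinates k to (n, β, ν) with
coordinates l. -/
noncomputable def Wdist {d m n : ℕ} (α : Fin m → Fin m → ℝ) (μ : Fin m → ℝ)
    (β : Fin n → Fin n → ℝ) (ν : Fin n → ℝ)
    (k : Fin d → Fin m → ℝ) (l : Fin d → Fin n → ℝ) : ℝ :=
  sInf {x | ∃ ω, IsTransportPlan α μ β ν ω ∧ x = Real.sqrt (transportCost k l ω)}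

/-- If both classical systems satisfy detailed balance, then a coupling ω
is a transport plan from (m, α, μ) to (n, β, ν) iff its transpose is a transport plan
from (n, β, ν) to (m, α, μ). -/
theorem stmt_6 {m n : ℕ} (α : Fin m → Fin m → ℝ) (μ : Fin m → ℝ)
    (β : Fin n → Fin n → ℝ) (ν : Fin n → ℝ)
    (hA : IsClassicalSystem α μ) (hB : IsClassicalSystem β ν)
    (hdbA : ∀ p q, μ p * α p q = μ q * α q p)
    (hdbB : ∀ r s, ν r * β r s = ν s * β s r)
    (ω : Fin m → Fin n → ℝ) (hω : IsCoupling μ ν ω) :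
    IsTransportPlan α μ β ν ω ↔ IsTransportPlan β ν α μ (fun r p => ω p r) := by
  have key : ∀ {k : ℕ} (γ : Fin k → Fin k → ℝ) (ρ : Fin k → ℝ), (∀ p, 0 < ρ p) →
      (∀ p q, ρ p * γ p q = ρ q * γ q p) → ∀ r s, ρ r / ρ s * γ r s = γ s r := by
    intro k γ ρ hpos hdb r s
    rw [div_mul_eq_mul_div, hdb r s, mul_div_cancel_left₀ _ (hpos s).ne']
  have kA := key α μ hA.2.2.1 hdbA
  have kB := key β ν hB.2.2.1 hdbB
  unfold IsTransportPlan
  simp only [kA, kB]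
  constructor
  · rintro ⟨-, h⟩
    exact ⟨⟨fun r p => hω.1 p r, hω.2.2, hω.2.1⟩, fun r q => (h q r).symm⟩
  · rintro ⟨-, h⟩
    exact ⟨hω, fun q r => (h r q).symm⟩
end

section
/- Let (m, α, μ) and (n, β, ν) be classical systems both satisfying detailed balance (μ_p α_{pq} = μ_q α_{qp} for all p,q, and ν_r β_{rs} = ν_s β_{sr} for all r,s), and fix coordinates k = (k_1,…,k_d), each k_i ∈ ℝ^m, and l = (l_1,…,l_d), each l_i ∈ ℝ^n. Then the Wasserstein distance from (m, α, μ) (with coordinates k) to (n, β, ν) (with coordinates l) equals the Wasserstein distance from (n, β, ν) (with coordinates l) to (m, α, μ) (with coordinates k). -/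
theorem div_mul_of_detailed_balance {m : ℕ} {α : Fin m → Fin m → ℝ} {μ : Fin m → ℝ}
    (hA : IsClassicalSystem α μ) (hdbA : ∀ p q, μ p * α p q = μ q * α q p) (r s : Fin m) :
    μ r / μ s * α r s = α s r := by
  have hs : μ s ≠ 0 := (hA.2.2.1 s).ne'
  rw [div_mul_eq_mul_div, hdbA r s, mul_div_cancel_left₀ _ hs]

theorem transportPlan_swap {m n : ℕ} {α : Fin m → Fin m → ℝ} {μ : Fin m → ℝ}
    {β : Fin n → Fin n → ℝ} {ν : Fin n → ℝ}
    (hA : IsClassicalSystem α μ) (hB : IsClassicalSystem β ν)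
    (hdbA : ∀ p q, μ p * α p q = μ q * α q p)
    (hdbB : ∀ r s, ν r * β r s = ν s * β s r)
    {ω : Fin m → Fin n → ℝ} (h : IsTransportPlan α μ β ν ω) :
    IsTransportPlan β ν α μ (fun r p => ω p r) := by
  obtain ⟨⟨h0, h1, h2⟩, h3⟩ := h
  refine ⟨⟨fun r p => h0 p r, h2, h1⟩, fun q r => ?_⟩
  have h4 := h3 r q
  simp only [div_mul_of_detailed_balance hB hdbB] at h4
  simp only [div_mul_of_detailed_balance hA hdbA]
  exact h4.symm

theorem transportCost_swap {d m n : ℕ} (k : Fin d → Fin m → ℝ) (l : Fin d → Fin n → ℝ)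
    (ω : Fin m → Fin n → ℝ) :
    transportCost k l ω = transportCost l k (fun r p => ω p r) := by
  unfold transportCost
  refine Finset.sum_congr rfl fun i _ => ?_
  rw [Finset.sum_comm]
  refine Finset.sum_congr rfl fun r _ => Finset.sum_congr rfl fun p _ => ?_
  ring

/-- If both classical systems satisfy detailed balance, the Wasserstein
distance between them (with fixed coordinates) is symmetric. -/
theorem stmt_7 {d m n : ℕ} (α : Fin m → Fin m → ℝ) (μ : Fin m → ℝ)
    (β : Fin n → Fin n → ℝ) (ν : Fin n → ℝ)
    (hA : IsClassicalSystem α μ) (hB : IsClassicalSystem β ν)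
    (hdbA : ∀ p q, μ p * α p q = μ q * α q p)
    (hdbB : ∀ r s, ν r * β r s = ν s * β s r)
    (k : Fin d → Fin m → ℝ) (l : Fin d → Fin n → ℝ) :
    Wdist α μ β ν k l = Wdist β ν α μ l k := by
  unfold Wdist
  congr 1
  ext x
  constructor
  · rintro ⟨ω, hω, rfl⟩
    exact ⟨fun r p => ω p r, transportPlan_swap hA hB hdbA hdbB hω, by
      rw [transportCost_swap]⟩
  · rintro ⟨ω, hω, rfl⟩
    exact ⟨fun r p => ω p r, transportPlan_swap hB hA hdbB hdbA hω, by
      rw [transportCost_swap]⟩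
end

section
/- Let (m, α, μ), (n, β, ν) and (c, γ, ξ) be classical systems, let ω be a transport plan from (m, α, μ) to (n, β, ν), and let ψ be a transport plan from (n, β, ν) to (c, γ, ξ). Define the m×c matrix φ by φ_{pt} = Σ_{r=1}^n ω_{pr} ψ_{rt} / ν_r. Then φ is a transport plan from (m, α, μ) to (c, γ, ξ). -/
/-- The composition φ_{pt} = Σ_r ω_{pr} ψ_{rt} / ν_r of a transport plan ω
from (m, α, μ) to (n, β, ν) with a transport plan ψ from (n, β, ν) to (c, γ, ξ) is a
transport plan from (m, α, μ) to (c, γ, ξ). -/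
theorem stmt_8 {m n c : ℕ} (α : Fin m → Fin m → ℝ) (μ : Fin m → ℝ)
    (β : Fin n → Fin n → ℝ) (ν : Fin n → ℝ)
    (γ : Fin c → Fin c → ℝ) (ξ : Fin c → ℝ)
    (hA : IsClassicalSystem α μ) (hB : IsClassicalSystem β ν)
    (hC : IsClassicalSystem γ ξ)
    (ω : Fin m → Fin n → ℝ) (ψ : Fin n → Fin c → ℝ)
    (hω : IsTransportPlan α μ β ν ω) (hψ : IsTransportPlan β ν γ ξ ψ) :
    IsTransportPlan α μ γ ξ (fun p t => ∑ r, ω p r * ψ r t / ν r) := by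
  obtain ⟨-, -, hν, -, -⟩ := hB
  obtain ⟨⟨ω0, ω1, ω2⟩, ω3⟩ := hω
  obtain ⟨⟨ψ0, ψ1, ψ2⟩, ψ3⟩ := hψ
  refine ⟨⟨?_, ?_, ?_⟩, ?_⟩
  · intro p t
    exact Finset.sum_nonneg fun r _ =>
      div_nonneg (mul_nonneg (ω0 p r) (ψ0 r t)) (hν r).le
  · intro p
    rw [Finset.sum_comm, ← ω1 p]
    refine Finset.sum_congr rfl fun r _ => ?_
    rw [← Finset.sum_div, ← Finset.mul_sum, ψ1 r, mul_div_assoc, div_self (hν r).ne', mul_one]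
  · intro t
    rw [Finset.sum_comm, ← ψ2 t]
    refine Finset.sum_congr rfl fun r _ => ?_
    rw [← Finset.sum_div, ← Finset.sum_mul, ω2 r, mul_div_right_comm, div_self (hν r).ne',
      one_mul]
  · intro q t
    calc ∑ p, (∑ r, ω p r * ψ r t / ν r) * α p q
        = ∑ r, ψ r t / ν r * ∑ p, ω p r * α p q := by
          simp only [Finset.sum_mul, Finset.mul_sum]
          rw [Finset.sum_comm]
          refine Finset.sum_congr rfl fun r _ => Finset.sum_congr rfl fun p _ => ?_
          ring
      _ = ∑ r, ψ r t / ν r * ∑ s, ω q s * (ν r / ν s * β r s) := by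
          simp only [ω3]
      _ = ∑ s, ω q s / ν s * ∑ r, ψ r t * β r s := by
          simp only [Finset.mul_sum]
          rw [Finset.sum_comm]
          refine Finset.sum_congr rfl fun s _ => Finset.sum_congr rfl fun r _ => ?_
          have h1 := (hν r).ne'
          have h2 := (hν s).ne'
          field_simp
      _ = ∑ s, ω q s / ν s * ∑ u, ψ s u * (ξ t / ξ u * γ t u) := by
          simp only [ψ3]
      _ = ∑ u, (∑ s, ω q s * ψ s u / ν s) * (ξ t / ξ u * γ t u) := by
          simp only [Finset.sum_mul, Finset.mul_sum]
          rw [Finset.sum_comm]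
          refine Finset.sum_congr rfl fun u _ => Finset.sum_congr rfl fun s _ => ?_
          ring
end

section
/- Let (m, α, μ), (n, β, ν) and (c, γ, ξ) be classical systems with coordinates k = (k_1,…,k_d) (each k_i ∈ ℝ^m), l = (l_1,…,l_d) (each l_i ∈ ℝ^n) and h = (h_1,…,h_d) (each h_i ∈ ℝ^c) respectively. Then the Wasserstein distances satisfy the triangle inequality: W((m,α,μ),(c,γ,ξ)) ≤ W((m,α,μ),(n,β,ν)) + W((n,β,ν),(c,γ,ξ)), where each distance is formed with the coordinate tuples of the two systems involved. -/
/-- Weighted Minkowski inequality. -/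
lemma weighted_minkowski {ι : Type*} [Fintype ι] (w a b : ι → ℝ) (hw : ∀ i, 0 ≤ w i) :
    Real.sqrt (∑ i, w i * (a i + b i) ^ 2) ≤
      Real.sqrt (∑ i, w i * a i ^ 2) + Real.sqrt (∑ i, w i * b i ^ 2) := by
  have key : ∀ f : ι → ℝ, Real.sqrt (∑ i, w i * f i ^ 2) =
      ‖(WithLp.toLp 2 (fun i => Real.sqrt (w i) * f i) : EuclideanSpace ℝ ι)‖ := by
    intro f
    rw [EuclideanSpace.norm_eq]
    congr 1
    refine Finset.sum_congr rfl fun i _ => ?_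
    simp only [Real.norm_eq_abs, sq_abs, mul_pow, Real.sq_sqrt (hw i)]
  rw [key a, key b, key (fun i => a i + b i)]
  refine le_trans (le_of_eq ?_) (norm_add_le _ _)
  congr 1
  ext i
  simp [mul_add]

/-- The composition of couplings. -/
noncomputable def compPlan {m n c : ℕ} (ν : Fin n → ℝ) (ω : Fin m → Fin n → ℝ)
    (η : Fin n → Fin c → ℝ) (p : Fin m) (t : Fin c) : ℝ :=
  ∑ r, ω p r * η r t / ν r

lemma compPlan_coupling {m n c : ℕ} {μ : Fin m → ℝ} {ν : Fin n → ℝ} {ξ : Fin c → ℝ}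
    {ω : Fin m → Fin n → ℝ} {η : Fin n → Fin c → ℝ} (hν : ∀ r, 0 < ν r)
    (h1 : IsCoupling μ ν ω) (h2 : IsCoupling ν ξ η) :
    IsCoupling μ ξ (compPlan ν ω η) := by
  obtain ⟨a1, b1, c1⟩ := h1
  obtain ⟨a2, b2, c2⟩ := h2
  refine ⟨fun p t => Finset.sum_nonneg fun r _ =>
    div_nonneg (mul_nonneg (a1 _ _) (a2 _ _)) (hν r).le, fun p => ?_, fun t => ?_⟩
  · unfold compPlan
    rw [Finset.sum_comm, ← b1 p]
    refine Finset.sum_congr rfl fun r _ => ?_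
    rw [← Finset.sum_div, ← Finset.mul_sum, b2, mul_div_cancel_right₀ _ (hν r).ne']
  · unfold compPlan
    rw [Finset.sum_comm, ← c2 t]
    refine Finset.sum_congr rfl fun r _ => ?_
    rw [← Finset.sum_div, ← Finset.sum_mul, c1, mul_div_cancel_left₀ _ (hν r).ne']

lemma compPlan_plan {m n c : ℕ} {α : Fin m → Fin m → ℝ} {μ : Fin m → ℝ}
    {β : Fin n → Fin n → ℝ} {ν : Fin n → ℝ} {γ : Fin c → Fin c → ℝ} {ξ : Fin c → ℝ}
    {ω : Fin m → Fin n → ℝ} {η : Fin n → Fin c → ℝ} (hν : ∀ r, 0 < ν r)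
    (h1 : IsTransportPlan α μ β ν ω) (h2 : IsTransportPlan β ν γ ξ η) :
    IsTransportPlan α μ γ ξ (compPlan ν ω η) := by
  refine ⟨compPlan_coupling hν h1.1 h2.1, fun q t => ?_⟩
  have e1 : ∑ p, compPlan ν ω η p t * α p q
      = ∑ r, η r t / ν r * ∑ p, ω p r * α p q := by
    simp only [compPlan, Finset.sum_mul, Finset.mul_sum]
    rw [Finset.sum_comm]
    refine Finset.sum_congr rfl fun r _ => Finset.sum_congr rfl fun p _ => ?_
    ring
  have e2 : ∑ u, compPlan ν ω η q u * (ξ t / ξ u * γ t u)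
      = ∑ s, ω q s / ν s * ∑ u, η s u * (ξ t / ξ u * γ t u) := by
    simp only [compPlan, Finset.sum_mul, Finset.mul_sum]
    rw [Finset.sum_comm]
    refine Finset.sum_congr rfl fun r _ => Finset.sum_congr rfl fun p _ => ?_
    ring
  rw [e1, e2]
  simp only [h1.2, ← h2.2, Finset.mul_sum]
  rw [Finset.sum_comm]
  refine Finset.sum_congr rfl fun s _ => Finset.sum_congr rfl fun r _ => ?_
  have := (hν r).ne'
  have := (hν s).ne'
  field_simp

lemma compPlan_cost {d m n c : ℕ} {μ : Fin m → ℝ} {ν : Fin n → ℝ} {ξ : Fin c → ℝ}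
    {ω : Fin m → Fin n → ℝ} {η : Fin n → Fin c → ℝ} (hν : ∀ r, 0 < ν r)
    (h1 : IsCoupling μ ν ω) (h2 : IsCoupling ν ξ η)
    (k : Fin d → Fin m → ℝ) (l : Fin d → Fin n → ℝ) (h : Fin d → Fin c → ℝ) :
    Real.sqrt (transportCost k h (compPlan ν ω η)) ≤
      Real.sqrt (transportCost k l ω) + Real.sqrt (transportCost l h η) := by
  have M := weighted_minkowski (ι := Fin d × Fin m × Fin n × Fin c)
    (fun x => ω x.2.1 x.2.2.1 * η x.2.2.1 x.2.2.2 / ν x.2.2.1)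
    (fun x => k x.1 x.2.1 - l x.1 x.2.2.1)
    (fun x => l x.1 x.2.2.1 - h x.1 x.2.2.2)
    (fun x => div_nonneg (mul_nonneg (h1.1 _ _) (h2.1 _ _)) (hν _).le)
  simp only [Fintype.sum_prod_type, sub_add_sub_cancel] at M
  refine le_trans (le_of_eq (congrArg Real.sqrt ?_))
    (le_trans M (le_of_eq (congrArg₂ (fun x y => Real.sqrt x + Real.sqrt y) ?_ ?_)))
  · unfold transportCost
    refine Finset.sum_congr rfl fun i _ => Finset.sum_congr rfl fun p _ => ?_
    rw [Finset.sum_comm]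
    refine Finset.sum_congr rfl fun t _ => ?_
    simp only [compPlan, Finset.sum_mul]
  · symm
    unfold transportCost
    refine Finset.sum_congr rfl fun i _ => Finset.sum_congr rfl fun p _ =>
      Finset.sum_congr rfl fun r _ => ?_
    rw [← Finset.sum_mul, ← Finset.sum_div, ← Finset.mul_sum, h2.2.1,
      mul_div_cancel_right₀ _ (hν r).ne']
  · unfold transportCost
    refine Finset.sum_congr rfl fun i _ => ?_
    rw [Finset.sum_comm]
    refine Finset.sum_congr rfl fun r _ => ?_
    rw [Finset.sum_comm]
    refine Finset.sum_congr rfl fun t _ => ?_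
    rw [← Finset.sum_mul, ← Finset.sum_div, ← Finset.sum_mul, h1.2.2,
      mul_div_cancel_left₀ _ (hν r).ne']

lemma plan_exists {m n : ℕ} {α : Fin m → Fin m → ℝ} {μ : Fin m → ℝ}
    {β : Fin n → Fin n → ℝ} {ν : Fin n → ℝ}
    (hA : IsClassicalSystem α μ) (hB : IsClassicalSystem β ν) :
    IsTransportPlan α μ β ν (fun p r => μ p * ν r) := by
  obtain ⟨_, _, hμ, sμ, iμ⟩ := hA
  obtain ⟨_, rβ, hν, sν, _⟩ := hB
  refine ⟨⟨fun p r => mul_nonneg (hμ p).le (hν r).le, fun p => ?_, fun r => ?_⟩, fun q r => ?_⟩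
  · rw [← Finset.mul_sum, sν, mul_one]
  · rw [← Finset.sum_mul, sμ, one_mul]
  · have e1 : ∑ p, μ p * ν r * α p q = ν r * ∑ p, μ p * α p q := by
      rw [Finset.mul_sum]
      exact Finset.sum_congr rfl fun p _ => by ring
    have e2 : ∑ s, μ q * ν s * (ν r / ν s * β r s) = μ q * ν r * ∑ s, β r s := by
      rw [Finset.mul_sum]
      refine Finset.sum_congr rfl fun s _ => ?_
      have := (hν s).ne'
      field_simp
    rw [e1, e2, iμ, rβ]
    ring

/-- The triangle inequality for the Wasserstein distance between classical
systems with coordinates. -/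
theorem stmt_9 {d m n c : ℕ} (α : Fin m → Fin m → ℝ) (μ : Fin m → ℝ)
    (β : Fin n → Fin n → ℝ) (ν : Fin n → ℝ)
    (γ : Fin c → Fin c → ℝ) (ξ : Fin c → ℝ)
    (hA : IsClassicalSystem α μ) (hB : IsClassicalSystem β ν)
    (hC : IsClassicalSystem γ ξ)
    (k : Fin d → Fin m → ℝ) (l : Fin d → Fin n → ℝ) (h : Fin d → Fin c → ℝ) :
    Wdist α μ γ ξ k h ≤ Wdist α μ β ν k l + Wdist β ν γ ξ l h := by
  have ν0 := hB.2.2.1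
  unfold Wdist
  rw [← sub_le_iff_le_add]
  refine le_csInf ⟨_, _, plan_exists hA hB, rfl⟩ ?_
  rintro x ⟨ω, hω, rfl⟩
  rw [sub_le_comm]
  refine le_csInf ⟨_, _, plan_exists hB hC, rfl⟩ ?_
  rintro y ⟨η, hη, rfl⟩
  rw [sub_le_iff_le_add']
  refine le_trans (csInf_le ⟨0, ?_⟩ ⟨_, compPlan_plan ν0 hω hη, rfl⟩)
    (compPlan_cost ν0 hω.1 hη.1 k l h)
  rintro z ⟨_, _, rfl⟩
  exact Real.sqrt_nonneg _
end

section
/- Let (m, α, μ) and (n, β, ν) be classical systems with coordinates k = (k_1,…,k_d), each k_i ∈ ℝ^m, and l = (l_1,…,l_d), each l_i ∈ ℝ^n. Then the set of transport plans from (m, α, μ) to (n, β, ν) is nonempty (it contains the product coupling ω_{pr} = μ_p ν_r), and the infimum defining the Wasserstein distance is attained: there exists a transport plan ω* from (m, α, μ) to (n, β, ν) such that I(ω*) ≤ I(ω) for every transport plan ω from (m, α, μ) to (n, β, ν), so that W((m,α,μ),(n,β,ν)) = I(ω*)^{1/2}. -/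
/-- The set of transport plans between two classical systems is nonempty
(it contains the product coupling), and the infimum defining the Wasserstein distance is
attained by an optimal transport plan. -/
theorem stmt_10 {d m n : ℕ} (α : Fin m → Fin m → ℝ) (μ : Fin m → ℝ)
    (β : Fin n → Fin n → ℝ) (ν : Fin n → ℝ)
    (hA : IsClassicalSystem α μ) (hB : IsClassicalSystem β ν)
    (k : Fin d → Fin m → ℝ) (l : Fin d → Fin n → ℝ) :
    IsTransportPlan α μ β ν (fun p r => μ p * ν r) ∧
    ∃ ωstar, IsTransportPlan α μ β ν ωstar ∧
      (∀ ω, IsTransportPlan α μ β ν ω → transportCost k l ωstar ≤ transportCost k l ω) ∧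
      Wdist α μ β ν k l = Real.sqrt (transportCost k l ωstar) := by
  obtain ⟨hα0, hα1, hμ0, hμ1, hμα⟩ := hA
  obtain ⟨hβ0, hβ1, hν0, hν1, hνβ⟩ := hB
  have hprod : IsTransportPlan α μ β ν (fun p r => μ p * ν r) := by
    refine ⟨⟨fun p r => (mul_pos (hμ0 p) (hν0 r)).le, fun p => ?_, fun r => ?_⟩, fun q r => ?_⟩
    · rw [← Finset.mul_sum, hν1, mul_one]
    · rw [← Finset.sum_mul, hμ1, one_mul]
    · have h1 : ∑ p, μ p * ν r * α p q = μ q * ν r := by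
        rw [← hμα q, Finset.sum_mul]
        exact Finset.sum_congr rfl fun p _ => by ring
      have h2 : ∑ s, μ q * ν s * (ν r / ν s * β r s) = μ q * ν r := by
        rw [← mul_one (μ q * ν r), ← hβ1 r, Finset.mul_sum]
        refine Finset.sum_congr rfl fun s _ => ?_
        have := (hν0 s).ne'
        field_simp
      exact h1.trans h2.symm
  refine ⟨hprod, ?_⟩
  have hclosed : IsClosed {ω : Fin m → Fin n → ℝ | IsTransportPlan α μ β ν ω} := by
    simp only [IsTransportPlan, IsCoupling, Set.setOf_and, Set.setOf_forall]
    refine ((?_ : IsClosed _).inter ((?_ : IsClosed _).inter ?_)).inter ?_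
    · exact isClosed_iInter fun p => isClosed_iInter fun r =>
        isClosed_le (by fun_prop) (by fun_prop)
    · exact isClosed_iInter fun p => isClosed_eq (by fun_prop) (by fun_prop)
    · exact isClosed_iInter fun p => isClosed_eq (by fun_prop) (by fun_prop)
    · exact isClosed_iInter fun p => isClosed_iInter fun r =>
        isClosed_eq (by fun_prop) (by fun_prop)
  have hcompact : IsCompact {ω : Fin m → Fin n → ℝ | IsTransportPlan α μ β ν ω} := by
    refine (isCompact_Icc (a := fun _ _ => (0 : ℝ)) (b := fun p _ => μ p)).of_isClosed_subset
      hclosed ?_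
    rintro ω ⟨⟨h0, h1, -⟩, -⟩
    refine ⟨fun p r => h0 p r, fun p r => ?_⟩
    show ω p r ≤ μ p
    rw [← h1 p]
    exact Finset.single_le_sum (f := fun r => ω p r) (fun s _ => h0 p s) (Finset.mem_univ r)
  have hcont : Continuous (fun ω : Fin m → Fin n → ℝ => transportCost k l ω) := by
    unfold transportCost
    fun_prop
  obtain ⟨w, hw, hmin⟩ := hcompact.exists_isMinOn ⟨_, hprod⟩ hcont.continuousOn
  have hle : ∀ ω, IsTransportPlan α μ β ν ω → transportCost k l w ≤ transportCost k l ω :=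
    fun ω hω => hmin hω
  refine ⟨w, hw, hle, ?_⟩
  refine IsLeast.csInf_eq ⟨⟨w, hw, rfl⟩, ?_⟩
  rintro x ⟨ω, hω, rfl⟩
  exact Real.sqrt_le_sqrt (hle ω hω)
end

section
/- In the 4-point/2-point example, there exists a transport plan ω from (4, α, μ) to (2, β, ν) with cost I(ω) = ω_{21} + ω_{41} + ω_{12} + ω_{32} = 0 if and only if ν_1 = μ_1 + μ_3 and the four equations μ_1 α_{12} + μ_3 α_{32} = μ_2 s, μ_1 α_{14} + μ_3 α_{34} = μ_4 s, μ_2 α_{21} + μ_4 α_{41} = μ_1 r, μ_2 α_{23} + μ_4 α_{43} = μ_3 r all hold; moreover in that case the zero-cost transport plan is unique, namely ω_{11} = μ_1, ω_{31} = μ_3, ω_{22} = μ_2, ω_{42} = μ_4 and all other entries of ω equal 0. -/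
/-- In the 4-point/2-point example, a zero-cost transport plan from
(4, α, μ) to (2, β, ν) exists iff ν_1 = μ_1 + μ_3 and the four balance equations hold;
moreover the zero-cost transport plan is then unique. -/
theorem stmt_11 (α : Fin 4 → Fin 4 → ℝ) (μ : Fin 4 → ℝ)
    (hA : IsClassicalSystem α μ)
    (r s : ℝ) (hr0 : 0 ≤ r) (hr1 : r ≤ 1) (hs0 : 0 ≤ s) (hs1 : s ≤ 1)
    (ν : Fin 2 → ℝ) (hν : ∀ i, 0 < ν i) (hνsum : ν 0 + ν 1 = 1)
    (hdb : ν 0 * r = ν 1 * s) :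
    ((∃ ω, IsTransportPlan α μ (![![1 - r, r], ![s, 1 - s]]) ν ω ∧
        ω 1 0 + ω 3 0 + ω 0 1 + ω 2 1 = 0) ↔
      (ν 0 = μ 0 + μ 2 ∧
        μ 0 * α 0 1 + μ 2 * α 2 1 = μ 1 * s ∧
        μ 0 * α 0 3 + μ 2 * α 2 3 = μ 3 * s ∧
        μ 1 * α 1 0 + μ 3 * α 3 0 = μ 0 * r ∧
        μ 1 * α 1 2 + μ 3 * α 3 2 = μ 2 * r)) ∧
    ∀ ω, IsTransportPlan α μ (![![1 - r, r], ![s, 1 - s]]) ν ω →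
      ω 1 0 + ω 3 0 + ω 0 1 + ω 2 1 = 0 →
      ω = ![![μ 0, 0], ![0, μ 1], ![μ 2, 0], ![0, μ 3]] := by
  obtain ⟨-, -, hμ, hμsum, hinv⟩ := hA
  have h0 := hν 0
  have h1 := hν 1
  have e1 : ν 0 / ν 1 * r = s := by field_simp; linarith
  have e2 : ν 1 / ν 0 * s = r := by field_simp; linarith
  have e3 : ν 0 / ν 0 = 1 := div_self h0.ne'
  have e4 : ν 1 / ν 1 = 1 := div_self h1.ne'
  have i0 := hinv 0
  have i1 := hinv 1
  have i2 := hinv 2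
  have i3 := hinv 3
  simp only [Fin.sum_univ_four] at i0 i1 i2 i3 hμsum
  have uniq : ∀ ω, IsTransportPlan α μ (![![1 - r, r], ![s, 1 - s]]) ν ω →
      ω 1 0 + ω 3 0 + ω 0 1 + ω 2 1 = 0 →
      ω = ![![μ 0, 0], ![0, μ 1], ![μ 2, 0], ![0, μ 3]] := by
    rintro ω ⟨⟨hnn, hrow, -⟩, -⟩ hc
    have a := hnn 1 0
    have b := hnn 3 0
    have c := hnn 0 1
    have d := hnn 2 1
    simp only [Fin.sum_univ_two] at hrow
    have r0 := hrow 0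
    have r1 := hrow 1
    have r2 := hrow 2
    have r3 := hrow 3
    funext p q
    fin_cases p <;> fin_cases q <;> simp <;> linarith
  refine ⟨⟨?_, ?_⟩, uniq⟩
  · rintro ⟨ω, hω, hc⟩
    have hu := uniq ω hω hc
    subst hu
    obtain ⟨⟨-, -, hcol⟩, heq⟩ := hω
    have c0 := hcol 0
    have q1 := heq 1 0
    have q3 := heq 3 0
    have q0 := heq 0 1
    have q2 := heq 2 1
    simp [Fin.sum_univ_four, e1, e2] at c0 q1 q3 q0 q2
    exact ⟨c0.symm, q1, q3, q0, q2⟩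
  · rintro ⟨hn, f1, f3, f0, f2⟩
    refine ⟨![![μ 0, 0], ![0, μ 1], ![μ 2, 0], ![0, μ 3]], ⟨⟨?_, ?_, ?_⟩, ?_⟩, ?_⟩
    · intro p q
      fin_cases p <;> fin_cases q <;> simp [(hμ _).le]
    · intro p
      fin_cases p <;> simp
    · intro q
      fin_cases q <;> simp [Fin.sum_univ_four] <;> linarith
    · intro p q
      fin_cases p <;> fin_cases q <;>
        simp [Fin.sum_univ_four, e1, e2, e3, e4] <;> linarith
    · simp
end

section
/- In the 4-point/2-point example, define f = |μ_1 α_{12} + μ_3 α_{32} − μ_2 s| + |μ_1 α_{14} + μ_3 α_{34} − μ_4 s| + |μ_2 α_{21} + μ_4 α_{41} − μ_1 r| + |μ_2 α_{23} + μ_4 α_{43} − μ_3 r|. Then for every transport plan ω from (4, α, μ) to (2, β, ν), f ≤ 4(1 + |1 − r − s|) · I(ω), where I(ω) = ω_{21} + ω_{41} + ω_{12} + ω_{32}. -/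
theorem aux_bound (a b c d x y z w e t S : ℝ) (ha : 0 ≤ a) (hb : 0 ≤ b) (hc : 0 ≤ c) (hd : 0 ≤ d)
    (hx : 0 ≤ x) (hy : 0 ≤ y) (hz : 0 ≤ z) (hw : 0 ≤ w)
    (hx1 : x ≤ 1) (hy1 : y ≤ 1) (hz1 : z ≤ 1) (hw1 : w ≤ 1) (he : 0 ≤ e) (heS : e ≤ S)
    (hS : a + b + c + d = S) :
    |a * x + b * y - c * z - d * w + e * t| ≤ (1 + |t|) * S := by
  have h1 : |a * x + b * y - c * z - d * w| ≤ S := by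
    have := mul_le_of_le_one_right ha hx1
    have := mul_le_of_le_one_right hb hy1
    have := mul_le_of_le_one_right hc hz1
    have := mul_le_of_le_one_right hd hw1
    have := mul_nonneg ha hx
    have := mul_nonneg hb hy
    have := mul_nonneg hc hz
    have := mul_nonneg hd hw
    rw [abs_le]
    constructor <;> linarith
  have h2 : |e * t| ≤ S * |t| := by
    rw [abs_mul, abs_of_nonneg he]
    exact mul_le_mul_of_nonneg_right heS (abs_nonneg t)
  have h3 := abs_add_le (a * x + b * y - c * z - d * w) (e * t)
  linarith

/-- In the 4-point/2-point example, the deviation f from the optimal form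
of the generalized detailed balance condition is bounded by 4(1 + |1 − r − s|) times the
cost of any transport plan from (4, α, μ) to (2, β, ν). -/
theorem stmt_12 (α : Fin 4 → Fin 4 → ℝ) (μ : Fin 4 → ℝ)
    (hA : IsClassicalSystem α μ)
    (r s : ℝ) (hr0 : 0 ≤ r) (hr1 : r ≤ 1) (hs0 : 0 ≤ s) (hs1 : s ≤ 1)
    (ν : Fin 2 → ℝ) (hν : ∀ i, 0 < ν i) (hνsum : ν 0 + ν 1 = 1)
    (hdb : ν 0 * r = ν 1 * s) :
    ∀ ω, IsTransportPlan α μ (![![1 - r, r], ![s, 1 - s]]) ν ω →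
      |μ 0 * α 0 1 + μ 2 * α 2 1 - μ 1 * s| +
        |μ 0 * α 0 3 + μ 2 * α 2 3 - μ 3 * s| +
        |μ 1 * α 1 0 + μ 3 * α 3 0 - μ 0 * r| +
        |μ 1 * α 1 2 + μ 3 * α 3 2 - μ 2 * r| ≤
      4 * (1 + |1 - r - s|) * (ω 1 0 + ω 3 0 + ω 0 1 + ω 2 1) := by
  rintro ω ⟨⟨hω, hμ, -⟩, hT⟩
  obtain ⟨hα, hrow, -, -, -⟩ := hA
  have hα1 : ∀ p q, α p q ≤ 1 := fun p q => by
    rw [← hrow p]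
    exact Finset.single_le_sum (fun i _ => hα p i) (Finset.mem_univ q)
  have hn0 := (hν 0).ne'
  have hn1 := (hν 1).ne'
  have e1 : ν 0 / ν 1 * r = s := by field_simp; linarith
  have e2 : ν 1 / ν 0 * s = r := by field_simp; linarith
  have T0 : ∀ q, ω 0 0 * α 0 q + ω 1 0 * α 1 q + ω 2 0 * α 2 q + ω 3 0 * α 3 q
      = ω q 0 * (1 - r) + ω q 1 * s := fun q => by
    have h := hT q 0
    simpa [Fin.sum_univ_four, Fin.sum_univ_two, div_self hn0, e1] using h
  have T1 : ∀ q, ω 0 1 * α 0 q + ω 1 1 * α 1 q + ω 2 1 * α 2 q + ω 3 1 * α 3 q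
      = ω q 0 * r + ω q 1 * (1 - s) := fun q => by
    have h := hT q 1
    simpa [Fin.sum_univ_four, Fin.sum_univ_two, div_self hn1, e2] using h
  simp only [Fin.sum_univ_two] at hμ
  have p1 := hω 1 0
  have p2 := hω 3 0
  have p3 := hω 0 1
  have p4 := hω 2 1
  have A : ∀ q, ω q 0 ≤ ω 1 0 + ω 3 0 + ω 0 1 + ω 2 1 →
      |μ 0 * α 0 q + μ 2 * α 2 q - μ q * s| ≤
      (1 + |1 - r - s|) * (ω 1 0 + ω 3 0 + ω 0 1 + ω 2 1) := fun q hq => by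
    have h := aux_bound (ω 0 1) (ω 2 1) (ω 1 0) (ω 3 0) (α 0 q) (α 2 q) (α 1 q) (α 3 q) (ω q 0)
      (1 - r - s) _ p3 p4 p1 p2 (hα _ _) (hα _ _) (hα _ _) (hα _ _)
      (hα1 _ _) (hα1 _ _) (hα1 _ _) (hα1 _ _) (hω _ _) hq (by ring)
    convert h using 2
    rw [← hμ 0, ← hμ 2, ← hμ q]
    linear_combination T0 q
  have B : ∀ q, ω q 1 ≤ ω 1 0 + ω 3 0 + ω 0 1 + ω 2 1 →
      |μ 1 * α 1 q + μ 3 * α 3 q - μ q * r| ≤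
      (1 + |1 - r - s|) * (ω 1 0 + ω 3 0 + ω 0 1 + ω 2 1) := fun q hq => by
    have h := aux_bound (ω 1 0) (ω 3 0) (ω 0 1) (ω 2 1) (α 1 q) (α 3 q) (α 0 q) (α 2 q) (ω q 1)
      (1 - r - s) _ p1 p2 p3 p4 (hα _ _) (hα _ _) (hα _ _) (hα _ _)
      (hα1 _ _) (hα1 _ _) (hα1 _ _) (hα1 _ _) (hω _ _) hq (by ring)
    convert h using 2
    rw [← hμ 1, ← hμ 3, ← hμ q]
    linear_combination T1 q
  have h1 := A 1 (by linarith)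
  have h2 := A 3 (by linarith)
  have h3 := B 0 (by linarith)
  have h4 := B 2 (by linarith)
  linarith
end

section
/- In the 4-point/2-point example, there exists a transport plan ψ from (2, β, ν) to (4, α, μ) with cost I(ψ) = ψ_{12} + ψ_{14} + ψ_{21} + ψ_{23} = 0 if and only if ν_1 = μ_1 + μ_3 and α_{12} + α_{14} = r, α_{32} + α_{34} = r, α_{21} + α_{23} = s, α_{41} + α_{43} = s; moreover in that case the zero-cost transport plan is unique, namely ψ_{11} = μ_1, ψ_{13} = μ_3, ψ_{22} = μ_2, ψ_{24} = μ_4 and all other entries of ψ equal 0. -/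
/-- In the 4-point/2-point example, a zero-cost transport plan from
(2, β, ν) to (4, α, μ) exists iff ν_1 = μ_1 + μ_3 and the four row-sum conditions on α
hold; moreover the zero-cost transport plan is then unique. -/
theorem stmt_13 (α : Fin 4 → Fin 4 → ℝ) (μ : Fin 4 → ℝ)
    (hA : IsClassicalSystem α μ)
    (r s : ℝ) (hr0 : 0 ≤ r) (hr1 : r ≤ 1) (hs0 : 0 ≤ s) (hs1 : s ≤ 1)
    (ν : Fin 2 → ℝ) (hν : ∀ i, 0 < ν i) (hνsum : ν 0 + ν 1 = 1)
    (hdb : ν 0 * r = ν 1 * s) :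
    ((∃ ψ, IsTransportPlan (![![1 - r, r], ![s, 1 - s]]) ν α μ ψ ∧
        ψ 0 1 + ψ 0 3 + ψ 1 0 + ψ 1 2 = 0) ↔
      (ν 0 = μ 0 + μ 2 ∧
        α 0 1 + α 0 3 = r ∧ α 2 1 + α 2 3 = r ∧
        α 1 0 + α 1 2 = s ∧ α 3 0 + α 3 2 = s)) ∧
    ∀ ψ, IsTransportPlan (![![1 - r, r], ![s, 1 - s]]) ν α μ ψ →
      ψ 0 1 + ψ 0 3 + ψ 1 0 + ψ 1 2 = 0 →
      ψ = ![![μ 0, 0, μ 2, 0], ![0, μ 1, 0, μ 3]] := by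
  obtain ⟨ha, hrow, hμ, hμs, hinv⟩ := hA
  have huniq : ∀ ψ, IsTransportPlan (![![1 - r, r], ![s, 1 - s]]) ν α μ ψ →
      ψ 0 1 + ψ 0 3 + ψ 1 0 + ψ 1 2 = 0 →
      ψ = ![![μ 0, 0, μ 2, 0], ![0, μ 1, 0, μ 3]] := by
    rintro ψ ⟨⟨h0, h1, h2⟩, h3⟩ hc
    have a1 := h0 0 1
    have a2 := h0 0 3
    have a3 := h0 1 0
    have a4 := h0 1 2
    have c0 := h2 0
    have c1 := h2 1
    have c2 := h2 2
    have c3 := h2 3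
    simp only [Fin.sum_univ_two] at c0 c1 c2 c3
    funext i j
    fin_cases i <;> fin_cases j <;> simp <;> linarith
  have m0 := hμ 0
  have m1 := hμ 1
  have m2 := hμ 2
  have m3 := hμ 3
  have r0 := hrow 0
  have r1 := hrow 1
  have r2 := hrow 2
  have r3 := hrow 3
  simp only [Fin.sum_univ_four] at r0 r1 r2 r3 hμs
  have cancel : ∀ x y z : ℝ, 0 < x → x * (y / x * z) = y * z := by
    intro x y z hx
    field_simp
  refine ⟨⟨?_, ?_⟩, huniq⟩
  · rintro ⟨ψ, h, hc⟩
    have e := huniq ψ h hc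
    subst e
    obtain ⟨⟨h0, h1, h2⟩, h3⟩ := h
    have k1 := h1 0
    have e0 := h3 1 0
    have e1 := h3 0 1
    have e2 := h3 1 2
    have e3 := h3 0 3
    simp [Fin.sum_univ_four, cancel _ _ _ m0, cancel _ _ _ m1, cancel _ _ _ m2,
      cancel _ _ _ m3, ← mul_add, m0.ne', m1.ne', m2.ne', m3.ne'] at k1 e0 e1 e2 e3
    exact ⟨k1.symm, e0.symm, e2.symm, e1.symm, e3.symm⟩
  · rintro ⟨hn, q0, q2, q1, q3⟩
    refine ⟨![![μ 0, 0, μ 2, 0], ![0, μ 1, 0, μ 3]], ⟨⟨?_, ?_, ?_⟩, ?_⟩, ?_⟩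
    · intro i j
      fin_cases i <;> fin_cases j <;> simp <;> linarith
    · intro i
      fin_cases i <;> simp [Fin.sum_univ_four] <;> linarith
    · intro j
      fin_cases j <;> simp
    · intro i j
      fin_cases i <;> fin_cases j <;>
        simp [Fin.sum_univ_four, cancel _ _ _ m0, cancel _ _ _ m1, cancel _ _ _ m2,
          cancel _ _ _ m3, ← mul_add, m0.ne', m1.ne', m2.ne', m3.ne'] <;> linarith
    · simp
end

section
/- Let λ ∈ [0,1], η, φ ∈ ℝ, and for θ ∈ ℝ let U_θ ∈ M_2(ℂ) be the diagonal matrix diag(1, e^{iθ}). For X ∈ M_2(ℂ) set α_*(X) = λ U_η X U_η* + (1−λ) U_φ X U_φ*, and for X, Y ∈ M_2(ℂ) set V_{XY} = Tr(α_*(X) Y) − Tr(X Y). Then for all density matrices X and Y in M_2(ℂ) (Hermitian, positive semidefinite, trace one): V_{XY} = V_{YX} if and only if λ sin η + (1−λ) sin φ = 0 or Im(X_{21} Y_{12}) = 0, where X_{21} denotes the (2,1) entry of X and Y_{12} the (1,2) entry of Y. -/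
open Matrix
open scoped ComplexOrder

/-- The unitary U_θ = diag(1, e^{iθ}). -/
noncomputable def Udiag (θ : ℝ) : Matrix (Fin 2) (Fin 2) ℂ :=
  Matrix.diagonal ![1, Complex.exp (θ * Complex.I)]

/-- The Schrödinger-picture dynamics α_*(X) = λ U_η X U_η* + (1−λ) U_φ X U_φ*. -/
noncomputable def alphaStar (lam η φ : ℝ) (X : Matrix (Fin 2) (Fin 2) ℂ) :
    Matrix (Fin 2) (Fin 2) ℂ :=
  (lam : ℂ) • (Udiag η * X * (Udiag η)ᴴ) + ((1 - lam : ℝ) : ℂ) • (Udiag φ * X * (Udiag φ)ᴴ)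

/-- The probability flow V_{XY} = Tr(α_*(X) Y) − Tr(X Y). -/
noncomputable def Vflow (lam η φ : ℝ) (X Y : Matrix (Fin 2) (Fin 2) ℂ) : ℂ :=
  (alphaStar lam η φ X * Y).trace - (X * Y).trace

/-- For density matrices X, Y in M_2(ℂ), V_{XY} = V_{YX} iff
λ sin η + (1−λ) sin φ = 0 or Im(X_{21} Y_{12}) = 0. -/
theorem stmt_14 (lam η φ : ℝ) (hlam0 : 0 ≤ lam) (hlam1 : lam ≤ 1)
    (X Y : Matrix (Fin 2) (Fin 2) ℂ)
    (hX : X.PosSemidef) (hXtr : X.trace = 1)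
    (hY : Y.PosSemidef) (hYtr : Y.trace = 1) :
    Vflow lam η φ X Y = Vflow lam η φ Y X ↔
      lam * Real.sin η + (1 - lam) * Real.sin φ = 0 ∨ (X 1 0 * Y 0 1).im = 0 := by
  have hX' : X 0 1 = star (X 1 0) := (hX.isHermitian.apply 0 1).symm
  have hY' : Y 1 0 = star (Y 0 1) := (hY.isHermitian.apply 1 0).symm
  have key : Vflow lam η φ X Y - Vflow lam η φ Y X =
      ((-4 * ((lam * Real.sin η + (1 - lam) * Real.sin φ) * (X 1 0 * Y 0 1).im) : ℝ) : ℂ) := by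
    apply Complex.ext <;>
    simp [Vflow, alphaStar, Udiag, Matrix.trace_fin_two, Matrix.mul_apply, Fin.sum_univ_two,
      Matrix.diagonal_apply, hX', hY', Complex.exp_re, Complex.exp_im, Matrix.conjTranspose_apply,
      -Complex.ofReal_sin, -Complex.ofReal_cos] <;> 
    ring_nf <;> simp only [Real.sin_sq] <;> ring
  rw [← sub_eq_zero, key, Complex.ofReal_eq_zero, ← mul_eq_zero]
  constructor
  · intro h; linarith
  · intro h; rw [h]; ring
end
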